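/- For every positive integer n, every d ≥ 1, every real a and every real p with p ∈ ℝ, the Mneimneh-like sum satisfies the transformation M_n^{(s_1,…,s_d)}(a,p) = Σ_{n ≥ n_1 ≥ n_2 ≥ … ≥ n_{|s|} ≥ 1} [ (Π_{r=1}^{d} (1-p)^{n_{|s|_{r-1}+1} - n_{|s|_r}}) / (n_1 n_2 ⋯ n_{|s|}) ] · [ (1-p+ap)^{n_{|s|}} − (1-p)^{n_{|s|}} ], where s = (s_1,…,s_d) ∈ ℕ^d, |s|_r := s_1 + … + s_r (with |s|_0 := 0) and |s| := |s|_d. -/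

import Mathlib

/-- `ent m α` is the entry `n_{α+1}` (0-indexed access) of the index tuple `m`,
with junk value `1` out of range. -/
def ent {L : ℕ} (m : Fin L → ℕ) (α : ℕ) : ℕ :=
  if h : α < L then m ⟨α, h⟩ else 1

/-- The finite set of index tuples `(n₁,…,n_L)` with `n ≥ n₁ ≥ n₂ ≥ ⋯ ≥ n_L ≥ 1`. -/
def Idx (n L : ℕ) : Finset (Fin L → ℕ) :=
  (Fintype.piFinset fun _ : Fin L => Finset.Icc 1 n).filter
    fun m => ∀ i j : Fin L, i ≤ j → m j ≤ m i

/-- Generalized multiple harmonic-star value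
`ζ*_k(s₁,…,s_d; a) = ∑_{k ≥ n₁ ≥ ⋯ ≥ n_d ≥ 1} a^{n_d}/(n₁^{s₁} ⋯ n_d^{s_d})`. -/
noncomputable def zetaStarK (k : ℕ) (s : List ℕ) (a : ℝ) : ℝ :=
  ∑ m ∈ Idx k s.length,
    a ^ ent m (s.length - 1) / ∏ i : Fin s.length, (m i : ℝ) ^ s.get i

/-- Mneimneh-like sum
`M_n^{(s₁,…,s_d)}(a,p) = ∑_{k=1}^n C(n,k)·p^k·(1-p)^{n-k}·ζ*_k(s;a)`. -/
noncomputable def M (n : ℕ) (s : List ℕ) (a p : ℝ) : ℝ :=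
  ∑ k ∈ Finset.Icc 1 n, (n.choose k : ℝ) * p ^ k * (1 - p) ^ (n - k) * zetaStarK k s a

/-!
Write `H_c g (n) = ∑_{1 ≤ m ≤ n} c ^ (n - m) / m * g m`. For `g 0 = 0`, Pascal's rule shows that the
binomial transform `B` with weights `p ^ k * q ^ (n - k)` satisfies `B ∘ H_c = H_{q + p * c} ∘ B`.
Since `H_0` divides by the argument, `ζ*` is obtained from `a ^ k - 0 ^ k` by composing the
operators `H_1 ∘ H_0 ^ (s_i - 1)`. For `q = 1 - p` the map `c ↦ q + p * c` fixes `1` and sends `0`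
to `1 - p`, and `B` turns `a ^ k - 0 ^ k` into `(1 - p + a * p) ^ n - (1 - p) ^ n`. When the
operators `H_1 ∘ H_{1 - p} ^ (s_i - 1)` are expanded over index tuples, the powers of `1 - p`
telescope inside each block.
-/

open Finset
open Matrix (vecCons)

section IndexTuples

variable {n L : ℕ} {t : Fin L → ℕ}

lemma mem_Idx : t ∈ Idx n L ↔ (∀ i, t i ∈ Icc 1 n) ∧ Antitone t := by
  simp only [Idx, mem_filter, Fintype.mem_piFinset, Antitone]

lemma vecCons_mem_Idx {m : ℕ} : vecCons m t ∈ Idx n (L + 1) ↔ m ∈ Icc 1 n ∧ t ∈ Idx m L := by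
  simp only [mem_Idx, Fin.forall_fin_succ, Matrix.cons_val_zero, Matrix.cons_val_succ, mem_Icc]
  constructor
  · rintro ⟨⟨hm, ht⟩, h_anti⟩
    exact ⟨hm, fun i ↦ ⟨(ht i).1, h_anti (Fin.zero_le i.succ)⟩,
      fun i j hij ↦ h_anti (Fin.succ_le_succ_iff.2 hij)⟩
  · rintro ⟨hm, ht, h_anti⟩
    refine ⟨⟨hm, fun i ↦ ⟨(ht i).1, (ht i).2.trans hm.2⟩⟩, fun i j hij ↦ ?_⟩
    cases j using Fin.cases with
    | zero => rw [Fin.le_zero_iff.1 hij]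
    | succ j =>
      cases i using Fin.cases with
      | zero => exact (ht j).2
      | succ i => exact h_anti (Fin.succ_le_succ_iff.1 hij)

lemma sum_Idx_succ {R : Type*} [AddCommMonoid R] (n L : ℕ) (F : (Fin (L + 1) → ℕ) → R) :
    ∑ t ∈ Idx n (L + 1), F t = ∑ m ∈ Icc 1 n, ∑ t ∈ Idx m L, F (vecCons m t) := by
  rw [sum_sigma']
  refine sum_nbij' (fun t ↦ ⟨Matrix.vecHead t, Matrix.vecTail t⟩) (fun x ↦ vecCons x.1 x.2)
    (fun t ht ↦ ?_) (fun x hx ↦ ?_) (fun t _ ↦ ?_) (fun x _ ↦ ?_) (fun t _ ↦ ?_)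
  · rw [← Matrix.cons_head_tail t, vecCons_mem_Idx] at ht
    exact mem_sigma.2 ht
  · exact vecCons_mem_Idx.2 (mem_sigma.1 hx)
  · exact Matrix.cons_head_tail t
  · simp
  · simp

lemma ent_vecCons_zero (m : ℕ) (t : Fin L → ℕ) : ent (vecCons m t) 0 = m := by
  simp [ent]

lemma ent_vecCons_succ (m : ℕ) (t : Fin L → ℕ) (i : ℕ) :
    ent (vecCons m t) (i + 1) = ent t i := by
  simp [ent]

lemma ent_vecCons_of_pos (m : ℕ) (t : Fin L → ℕ) {i : ℕ} (hi : 0 < i) :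
    ent (vecCons m t) i = ent t (i - 1) := by
  obtain ⟨j, rfl⟩ := Nat.exists_eq_add_one_of_ne_zero hi.ne'
  exact ent_vecCons_succ m t j

lemma one_le_ent (ht : t ∈ Idx n L) (i : ℕ) : 1 ≤ ent t i := by
  unfold ent
  split_ifs with hi
  · exact (mem_Icc.1 ((mem_Idx.1 ht).1 _)).1
  · exact le_rfl

lemma antitone_ent (ht : t ∈ Idx n L) : Antitone (ent t) := by
  intro i j hij
  by_cases hj : j < L
  · simpa only [ent, hj, hij.trans_lt hj, dif_pos] using (mem_Idx.1 ht).2 (Fin.mk_le_mk.2 hij)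
  · simpa only [ent, hj, dif_neg, not_false_eq_true] using one_le_ent ht i

end IndexTuples

section NestedSums

variable {ι R : Type*} [CommSemiring R] (w : ι → ℕ → ℕ → R) (φ : ℕ → R)

/-- The iterated sum
`∑_{n ≥ n₁ ≥ ⋯ ≥ n_L ≥ 1} w i₁ n n₁ * w i₂ n₁ n₂ * ⋯ * w i_L n_{L-1} n_L * φ n_L`
attached to a list of labels `[i₁, …, i_L]` and a family `w` of kernels. -/
def nestedSum : List ι → ℕ → R
  | [], n => φ n
  | i :: l, n => ∑ m ∈ Icc 1 n, w i n m * nestedSum l m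

/-- The product `w i₁ (u 0) (u 1) * ⋯ * w i_L (u (L - 1)) (u L)` of the kernels with labels
`[i₁, …, i_L]` along a path `u`. In the expansion of `nestedSum` at `n`, the path of a tuple
`(n₁, …, n_L)` is `n, n₁, …, n_L`. -/
def pathProd : List ι → (ℕ → ℕ) → R
  | [], _ => 1
  | i :: l, u => w i (u 0) (u 1) * pathProd l fun j ↦ u (j + 1)

lemma pathProd_eq_prod_get (l : List ι) (u : ℕ → ℕ) :
    pathProd w l u = ∏ i : Fin l.length, w (l.get i) (u i) (u (i + 1)) := by
  induction l generalizing u with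
  | nil => rfl
  | cons i l ih => simp [pathProd, ih, Fin.prod_univ_succ]

lemma nestedSum_append (l l' : List ι) :
    nestedSum w φ (l ++ l') = nestedSum w (nestedSum w φ l') l := by
  funext n
  induction l generalizing n with
  | nil => rfl
  | cons i l ih => simp only [List.cons_append, nestedSum, ih]

lemma nestedSum_eq_sum_Idx (l : List ι) (n : ℕ) {L : ℕ} (hL : l.length = L) :
    nestedSum w φ l n =
      ∑ t ∈ Idx n L, pathProd w l (ent (vecCons n t)) * φ (ent (vecCons n t) L) := by
  subst hL
  induction l generalizing n with
  | nil =>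
    have h_univ : Idx n 0 = univ := eq_univ_of_forall fun t ↦ by simp [mem_Idx, Antitone]
    simp [h_univ, nestedSum, pathProd, ent_vecCons_zero]
  | cons i l ih =>
    rw [nestedSum, List.length_cons, sum_Idx_succ]
    simp only [ih, mul_sum, pathProd, ent_vecCons_zero, ent_vecCons_succ, mul_assoc]

end NestedSums

section BinomialTransform

/-- The binomial transform `n ↦ ∑_{i + j = n} C(n, i) * p ^ i * q ^ j * g i` of `g` with weights `p`
and `q`; for `q = 1 - p` it maps `k ↦ ζ*_k` to the Mneimneh-like sums. -/
def binomialTransform {R : Type*} [CommSemiring R] (p q : R) (g : ℕ → R) (n : ℕ) : R :=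
  ∑ ij ∈ antidiagonal n, (n.choose ij.1 : R) * (p ^ ij.1 * q ^ ij.2 * g ij.1)

section CommSemiring

variable {R : Type*} [CommSemiring R] (p q : R)

lemma binomialTransform_zero (g : ℕ → R) : binomialTransform p q g 0 = g 0 := by
  simp [binomialTransform]

lemma binomialTransform_add (g h : ℕ → R) (n : ℕ) :
    binomialTransform p q (fun k ↦ g k + h k) n =
      binomialTransform p q g n + binomialTransform p q h n := by
  simp only [binomialTransform, mul_add, sum_add_distrib]

lemma binomialTransform_const_mul (c : R) (g : ℕ → R) (n : ℕ) :
    binomialTransform p q (fun k ↦ c * g k) n = c * binomialTransform p q g n := by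
  simp only [binomialTransform, mul_sum, mul_left_comm c]

lemma binomialTransform_pow (x : R) (n : ℕ) :
    binomialTransform p q (fun k ↦ x ^ k) n = (p * x + q) ^ n := by
  rw [binomialTransform, (Commute.all _ _).add_pow']
  refine sum_congr rfl fun ij _ ↦ ?_
  rw [nsmul_eq_mul, mul_pow, mul_right_comm (p ^ ij.1)]

lemma binomialTransform_succ (g : ℕ → R) (n : ℕ) :
    binomialTransform p q g (n + 1) =
      p * binomialTransform p q (fun k ↦ g (k + 1)) n + q * binomialTransform p q g n := by
  simp only [binomialTransform]
  rw [sum_antidiagonal_choose_succ_mul fun i j ↦ p ^ i * q ^ j * g i, add_comm, mul_sum, mul_sum]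
  congr 1 <;> refine sum_congr rfl fun ij hij ↦ ?_
  · rw [Nat.choose_symm_of_eq_add (mem_antidiagonal.1 hij).symm]
    ring
  · ring

end CommSemiring

lemma binomialTransform_pow_sub_zero_pow {R : Type*} [CommRing R] (p q x : R) (n : ℕ) :
    binomialTransform p q (fun k ↦ x ^ k - 0 ^ k) n = (p * x + q) ^ n - q ^ n := by
  have h_sub : binomialTransform p q (fun k ↦ x ^ k - 0 ^ k) n =
      binomialTransform p q (fun k ↦ x ^ k) n - binomialTransform p q (fun k ↦ 0 ^ k) n := by
    simp only [binomialTransform, mul_sub, sum_sub_distrib]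
  rw [h_sub, binomialTransform_pow, binomialTransform_pow, mul_zero, zero_add]

variable {K : Type*} [Field K] [CharZero K] (p q : K)

lemma binomialTransform_shift_div {g : ℕ → K} (hg : g 0 = 0) (n : ℕ) :
    p * binomialTransform p q (fun k ↦ g (k + 1) / (k + 1 : ℕ)) n =
      binomialTransform p q g (n + 1) / (n + 1 : ℕ) := by
  simp only [binomialTransform]
  rw [Nat.sum_antidiagonal_succ, hg, mul_zero, mul_zero, zero_add, mul_sum, sum_div]
  refine sum_congr rfl fun ij _ ↦ ?_
  have h_choose : ((n + 1 : ℕ) : K) * n.choose ij.1 = (n + 1).choose (ij.1 + 1) * (ij.1 + 1 : ℕ) :=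
    mod_cast Nat.add_one_mul_choose_eq n ij.1
  have hn : ((n + 1 : ℕ) : K) ≠ 0 := Nat.cast_ne_zero.2 n.succ_ne_zero
  have hi : ((ij.1 + 1 : ℕ) : K) ≠ 0 := Nat.cast_ne_zero.2 ij.1.succ_ne_zero
  field_simp
  linear_combination p ^ (ij.1 + 1) * q ^ ij.2 * g (ij.1 + 1) * h_choose

end BinomialTransform

section GeomKernel

/-- The kernel `c ^ (n - m) / m` of the geometrically weighted harmonic sum
`∑_{1 ≤ m ≤ n} c ^ (n - m) / m * g m`; only arguments with `1 ≤ m ≤ n` are meaningful. -/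
def geomKernel {K : Type*} [Field K] (c : K) (n m : ℕ) : K :=
  c ^ (n - m) / m

variable {K : Type*} [Field K]

lemma sum_geomKernel_succ (c : K) (g : ℕ → K) (n : ℕ) :
    ∑ m ∈ Icc 1 (n + 1), geomKernel c (n + 1) m * g m =
      c * ∑ m ∈ Icc 1 n, geomKernel c n m * g m + g (n + 1) / (n + 1 : ℕ) := by
  rw [sum_Icc_succ_top (Nat.le_add_left 1 n), mul_sum]
  congr 1
  · refine sum_congr rfl fun m hm ↦ ?_
    rw [geomKernel, geomKernel, Nat.succ_sub (mem_Icc.1 hm).2, pow_succ]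
    ring
  · rw [geomKernel, Nat.sub_self, pow_zero, one_div_mul_eq_div]

lemma sum_geomKernel_zero (g : ℕ → K) (n : ℕ) :
    ∑ m ∈ Icc 1 n, geomKernel 0 n m * g m = g n / n := by
  cases n with
  | zero => simp
  | succ n => rw [sum_geomKernel_succ, zero_mul, zero_add]

lemma nestedSum_geomKernel_replicate_zero (φ : ℕ → K) (e n : ℕ) :
    nestedSum geomKernel φ (List.replicate e 0) n = φ n / (n : K) ^ e := by
  induction e generalizing n with
  | zero => simp [nestedSum]
  | succ e ih =>
    rw [List.replicate_succ, nestedSum, sum_geomKernel_zero, ih, div_div, pow_succ]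

lemma nestedSum_geomKernel_apply_zero {φ : ℕ → K} (hφ : φ 0 = 0) (cs : List K) :
    nestedSum geomKernel φ cs 0 = 0 := by
  cases cs <;> simp [nestedSum, hφ]

lemma pathProd_geomKernel_replicate_append (c : K) (e : ℕ) (cs : List K) {u : ℕ → ℕ}
    (hu : Antitone u) :
    pathProd geomKernel (List.replicate e c ++ cs) u =
      c ^ (u 0 - u e) / (∏ i ∈ range e, (u (i + 1) : K)) *
        pathProd geomKernel cs fun j ↦ u (j + e) := by
  induction e generalizing u with
  | zero => simp
  | succ e ih =>
    have h_tail : Antitone fun j ↦ u (j + 1) := fun i j hij ↦ hu (Nat.succ_le_succ hij)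
    have h_gap : u 0 - u (e + 1) = (u 0 - u 1) + (u 1 - u (e + 1)) :=
      (Nat.sub_add_sub_cancel (hu zero_le_one) (hu (Nat.le_add_left 1 e))).symm
    rw [List.replicate_succ, List.cons_append, pathProd, ih h_tail, geomKernel, h_gap, pow_add,
      prod_range_succ']
    simp only [zero_add, add_assoc, div_eq_mul_inv, mul_inv]
    ring

variable [CharZero K] (p q : K)

lemma binomialTransform_sum_geomKernel (c : K) {g : ℕ → K} (hg : g 0 = 0) (n : ℕ) :
    binomialTransform p q (fun k ↦ ∑ m ∈ Icc 1 k, geomKernel c k m * g m) n =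
      ∑ m ∈ Icc 1 n, geomKernel (q + p * c) n m * binomialTransform p q g m := by
  induction n with
  | zero => simp [binomialTransform_zero]
  | succ n ih =>
    rw [binomialTransform_succ]
    simp only [sum_geomKernel_succ, binomialTransform_add, binomialTransform_const_mul]
    rw [mul_add, binomialTransform_shift_div p q hg, ih]
    ring

lemma binomialTransform_nestedSum_geomKernel {φ : ℕ → K} (hφ : φ 0 = 0) (cs : List K) (n : ℕ) :
    binomialTransform p q (nestedSum geomKernel φ cs) n =
      nestedSum geomKernel (binomialTransform p q φ) (cs.map fun c ↦ q + p * c) n := by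
  induction cs generalizing n with
  | nil => rfl
  | cons c cs ih =>
    simp only [List.map_cons, nestedSum, ← ih]
    exact binomialTransform_sum_geomKernel p q c (nestedSum_geomKernel_apply_zero hφ cs) n

end GeomKernel

section BlockRatios

/-- The list of ratios `1, c, …, c, 1, c, …, c, …` whose `i`-th block has length `s_i` (an entry
`0` of `s` counts as `1`). With the kernels `geomKernel`, the ratio `c = 0` gives `ζ*(s)` and
`c = 1 - p` gives its binomial transform. -/
def blockRatios {R : Type*} [One R] (c : R) (s : List ℕ) : List R :=
  s.flatMap fun e ↦ 1 :: List.replicate (e - 1) c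

lemma blockRatios_cons {R : Type*} [One R] (c : R) (e : ℕ) (s : List ℕ) :
    blockRatios c (e :: s) = 1 :: (List.replicate (e - 1) c ++ blockRatios c s) := rfl

lemma length_blockRatios {R : Type*} [One R] (c : R) {s : List ℕ} (hs : ∀ e ∈ s, 1 ≤ e) :
    (blockRatios c s).length = s.sum := by
  induction s with
  | nil => rfl
  | cons e s ih =>
    obtain ⟨he, hs⟩ := List.forall_mem_cons.1 hs
    rw [blockRatios_cons, List.length_cons, List.length_append, List.length_replicate, ih hs,
      List.sum_cons]
    omega

lemma map_blockRatios {R S : Type*} [One R] [One S] {f : R → S} (hf : f 1 = 1) (c : R)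
    (s : List ℕ) : (blockRatios c s).map f = blockRatios (f c) s := by
  simp [blockRatios, List.map_flatMap, hf]

variable {K : Type*} [Field K]

lemma nestedSum_geomKernel_blockRatios_zero (φ : ℕ → K) {s : List ℕ} (hs : ∀ e ∈ s, 1 ≤ e) (n : ℕ) :
    nestedSum geomKernel φ (blockRatios 0 s) n = nestedSum (fun e _ m ↦ ((m : K) ^ e)⁻¹) φ s n := by
  induction s generalizing n with
  | nil => rfl
  | cons e s ih =>
    obtain ⟨he, hs⟩ := List.forall_mem_cons.1 hs
    rw [blockRatios_cons, nestedSum, nestedSum]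
    refine sum_congr rfl fun m _ ↦ ?_
    rw [nestedSum_append, nestedSum_geomKernel_replicate_zero, ← ih hs m]
    obtain ⟨k, rfl⟩ := Nat.exists_eq_add_of_le' he
    rw [geomKernel, one_pow, Nat.add_sub_cancel, div_mul_div_comm, one_mul, ← pow_succ',
      div_eq_inv_mul]

lemma pathProd_geomKernel_blockRatios (c : K) {s : List ℕ} (hs : ∀ e ∈ s, 1 ≤ e) {u : ℕ → ℕ}
    (hu : Antitone u) :
    pathProd geomKernel (blockRatios c s) u =
      (∏ r ∈ range s.length, c ^ (u ((s.take r).sum + 1) - u (s.take (r + 1)).sum)) /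
        ∏ i ∈ range s.sum, (u (i + 1) : K) := by
  induction s generalizing u with
  | nil => simp [blockRatios, pathProd]
  | cons e s ih =>
    obtain ⟨he, hs'⟩ := List.forall_mem_cons.1 hs
    obtain ⟨k, rfl⟩ := Nat.exists_eq_add_of_le' he
    have h_tail : Antitone fun j ↦ u (j + 1) := fun i j hij ↦ hu (Nat.succ_le_succ hij)
    have h_drop : Antitone fun j ↦ u (j + (k + 1)) := fun i j hij ↦ hu (Nat.add_le_add_right hij _)
    have h_block : pathProd geomKernel (blockRatios c ((k + 1) :: s)) u =
        c ^ (u 1 - u (k + 1)) / (∏ i ∈ range (k + 1), (u (i + 1) : K)) *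
          pathProd geomKernel (blockRatios c s) fun j ↦ u (j + (k + 1)) := by
      rw [blockRatios_cons, pathProd, Nat.add_sub_cancel,
        pathProd_geomKernel_replicate_append c k _ h_tail, prod_range_succ']
      simp only [geomKernel, one_pow, zero_add, add_assoc, div_eq_mul_inv, mul_inv]
      ring
    rw [h_block, ih hs' h_drop, div_mul_div_comm, List.length_cons, List.sum_cons,
      prod_range_succ' _ s.length, prod_range_add _ (k + 1) s.sum]
    simp only [List.take_succ_cons, List.sum_cons, List.take_zero, List.sum_nil, zero_add,
      add_comm (k + 1), add_right_comm _ (k + 1) 1]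
    rw [mul_comm (c ^ (u 1 - u (k + 1)))]

lemma nestedSum_geomKernel_blockRatios_eq_sum_Idx (c : K) (φ : ℕ → K) {n : ℕ} (hn : 0 < n)
    {s : List ℕ} (hd : s ≠ []) (hs : ∀ e ∈ s, 1 ≤ e) :
    nestedSum geomKernel φ (blockRatios c s) n =
      ∑ t ∈ Idx n s.sum,
        (∏ r ∈ range s.length, c ^ (ent t (s.take r).sum - ent t ((s.take (r + 1)).sum - 1))) /
          (∏ i ∈ range s.sum, (ent t i : K)) * φ (ent t (s.sum - 1)) := by
  have h_pos : ∀ r, 0 < (s.take (r + 1)).sum := by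
    obtain ⟨e, s, rfl⟩ := List.exists_cons_of_ne_nil hd
    intro r
    rw [List.take_succ_cons, List.sum_cons]
    exact Nat.add_pos_left (hs e List.mem_cons_self) _
  have h_sum_pos : 0 < s.sum := by
    simpa only [List.take_of_length_le (Nat.le_succ _)] using h_pos s.length
  rw [nestedSum_eq_sum_Idx _ _ _ n (length_blockRatios c hs)]
  refine sum_congr rfl fun t ht ↦ ?_
  have h_anti : Antitone (ent (vecCons n t)) :=
    antitone_ent (vecCons_mem_Idx.2 ⟨mem_Icc.2 ⟨hn, le_rfl⟩, ht⟩)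
  rw [pathProd_geomKernel_blockRatios c hs h_anti, ent_vecCons_of_pos n t h_sum_pos]
  simp only [ent_vecCons_succ, ent_vecCons_of_pos n t (h_pos _)]

end BlockRatios

section MneimnehSums

lemma zetaStarK_eq_nestedSum (k : ℕ) {s : List ℕ} (hs : s ≠ []) (a : ℝ) :
    zetaStarK k s a = nestedSum (fun e _ m ↦ ((m : ℝ) ^ e)⁻¹) (fun m ↦ a ^ m - 0 ^ m) s k := by
  rw [zetaStarK, nestedSum_eq_sum_Idx _ _ s k rfl]
  refine sum_congr rfl fun t ht ↦ ?_
  have h_last : ent (vecCons k t) s.length = ent t (s.length - 1) :=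
    ent_vecCons_of_pos k t (List.length_pos_iff.2 hs)
  have h_prod : pathProd (fun e _ m ↦ ((m : ℝ) ^ e)⁻¹) s (ent (vecCons k t)) =
      (∏ i : Fin s.length, (t i : ℝ) ^ s.get i)⁻¹ := by
    rw [pathProd_eq_prod_get, ← prod_inv_distrib]
    simp [ent]
  rw [h_last, h_prod, zero_pow (Nat.one_le_iff_ne_zero.1 (one_le_ent ht _)), sub_zero,
    div_eq_inv_mul]

lemma M_eq_binomialTransform (n : ℕ) {s : List ℕ} (hs : s ≠ []) (a p : ℝ) :
    M n s a p = binomialTransform p (1 - p) (fun k ↦ zetaStarK k s a) n := by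
  have h_zero : zetaStarK 0 s a = 0 := by
    obtain ⟨e, s, rfl⟩ := List.exists_cons_of_ne_nil hs
    simp [zetaStarK_eq_nestedSum, nestedSum]
  rw [M, binomialTransform, Nat.sum_antidiagonal_eq_sum_range_succ_mk, range_eq_Ico,
    sum_eq_sum_Ico_succ_bot n.succ_pos, h_zero, mul_zero, mul_zero, zero_add]
  exact sum_congr rfl fun k _ ↦ by ring

end MneimnehSums

/-- Transformation of Mneimneh-like sums (Theorem 2.1 / main theorem). -/
theorem stmt_0 (n : ℕ) (hn : 0 < n) (s : List ℕ) (hd : s ≠ [])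
    (hpos : ∀ e ∈ s, 1 ≤ e) (a p : ℝ) :
    M n s a p =
      ∑ t ∈ Idx n s.sum,
        (∏ r ∈ Finset.range s.length,
            (1 - p) ^ (ent t ((s.take r).sum) - ent t ((s.take (r + 1)).sum - 1))) /
          (∏ i ∈ Finset.range s.sum, (ent t i : ℝ)) *
          ((1 - p + a * p) ^ ent t (s.sum - 1) - (1 - p) ^ ent t (s.sum - 1)) := by
  calc M n s a p
    _ = binomialTransform p (1 - p)
          (nestedSum geomKernel (fun m ↦ a ^ m - 0 ^ m) (blockRatios 0 s)) n := by
      simp only [M_eq_binomialTransform n hd, zetaStarK_eq_nestedSum _ hd,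
        ← nestedSum_geomKernel_blockRatios_zero _ hpos]
    _ = nestedSum geomKernel (binomialTransform p (1 - p) fun m ↦ a ^ m - 0 ^ m)
          ((blockRatios 0 s).map fun c ↦ 1 - p + p * c) n :=
      binomialTransform_nestedSum_geomKernel p (1 - p) (by simp) _ n
    _ = nestedSum geomKernel (fun m ↦ (1 - p + a * p) ^ m - (1 - p) ^ m)
          (blockRatios (1 - p) s) n := by
      rw [map_blockRatios (by ring), mul_zero, add_zero]
      simp only [funext (binomialTransform_pow_sub_zero_pow p (1 - p) a), mul_comm p a,
        add_comm (a * p)]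
    _ = _ := nestedSum_geomKernel_blockRatios_eq_sum_Idx (1 - p) _ hn hd hpos
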